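/- Suppose (Ω_i, 𝒜_i) = (ℝ, ℬ(ℝ)) for all i = 1,…,n. Let P* ∈ ℙ be such that P*(A) = 1 for some compact set A ⊂ ℝ^n, and let 𝒰 = {Q ∈ ℙ : Q ≪ P* and (π_1,…,π_n) is a Q-martingale}. Then M ∩ 𝒰 ≠ ∅ if and only if Σ_{i=1}^n μ_i(f_i) ≥ inf_{Q ∈ 𝒰} Q(⊕_{i=1}^n f_i) for all bounded Borel functions f_1,…,f_n : ℝ → ℝ (with the convention inf ∅ = ∞). -/

import Mathlib

open MeasureTheory Set ENNReal

namespace FATransport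

variable {α : Type*} [MeasurableSpace α]

/-- The collection of measurable sets of `α` (the σ-field `𝒜`), as a type. -/
abbrev MSet (α : Type*) [MeasurableSpace α] := {A : Set α // MeasurableSet A}

/-- A finitely additive probability on the σ-field of `α`, viewed as an element
of `[0,1]^𝒜`: it maps the whole space to `1` and is additive on disjoint pairs. -/
def IsFAP (P : MSet α → unitInterval) : Prop :=
  (P ⟨Set.univ, MeasurableSet.univ⟩ : ℝ) = 1 ∧
    ∀ A B : MSet α, Disjoint A.1 B.1 →
      (P ⟨A.1 ∪ B.1, A.2.union B.2⟩ : ℝ) = (P A : ℝ) + (P B : ℝ)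

/-- `ℙ`, the set of all finitely additive probabilities on `𝒜`, as a subset of
`[0,1]^𝒜` (with its product topology). -/
def FAPs (α : Type*) [MeasurableSpace α] : Set (MSet α → unitInterval) :=
  {P | IsFAP P}

/-- Integral of a simple function with respect to a finitely additive set function. -/
noncomputable def simpleInt (P : MSet α → unitInterval) (s : SimpleFunc α ℝ) : ℝ :=
  ∑ y ∈ s.range, y * (P ⟨(⇑s) ⁻¹' {y}, s.measurableSet_fiber y⟩ : ℝ)

/-- `P(f)` for a bounded measurable `f : α → ℝ`: the supremum of the integrals of
simple functions below `f` (for a f.a.p. `P` and bounded measurable `f` this agrees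
with the integral defined by uniform approximation by simple functions). -/
noncomputable def fapInt (P : MSet α → unitInterval) (f : α → ℝ) : ℝ :=
  sSup (simpleInt P '' {s : SimpleFunc α ℝ | ∀ x, s x ≤ f x})

/-- `P(c) = sup_k P(c ∧ k)` for a `[0,∞]`-valued `c`. -/
noncomputable def fapIntTop (P : MSet α → unitInterval) (c : α → ℝ≥0∞) : ℝ≥0∞ :=
  ⨆ k : ℕ, ENNReal.ofReal (fapInt P (fun x => (c x ⊓ (k : ℝ≥0∞)).toReal))

/-- A real-valued `f` is `P`-integrable iff `P(|f|) < ∞`. -/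
def FapIntegrable (P : MSet α → unitInterval) (f : α → ℝ) : Prop :=
  fapIntTop P (fun x => ENNReal.ofReal |f x|) < ⊤

/-- `P(f) = P(f⁺) - P(f⁻)` for a (`P`-integrable) real-valued `f`. -/
noncomputable def fapIntR (P : MSet α → unitInterval) (f : α → ℝ) : ℝ :=
  (fapIntTop P (fun x => ENNReal.ofReal (f x))).toReal -
    (fapIntTop P (fun x => ENNReal.ofReal (-f x))).toReal

/-- `P ≪ Q` for finitely additive probabilities. -/
def FapAC (P Q : MSet α → unitInterval) : Prop :=
  ∀ A : MSet α, (Q A : ℝ) = 0 → (P A : ℝ) = 0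

variable {n : ℕ} {Ω : Fin n → Type*} [∀ i, MeasurableSpace (Ω i)]

/-- `M`, the set of finitely additive probabilities on `𝒜 = ⊗ᵢ 𝒜ᵢ` whose
`i`-th marginal is `μ i` for every `i`. -/
def couplings (μ : ∀ i, Measure (Ω i)) : Set (MSet (∀ i, Ω i) → unitInterval) :=
  {P | IsFAP P ∧ ∀ (i : Fin n) (B : Set (Ω i)) (hB : MeasurableSet B),
    (P ⟨(fun ω => ω i) ⁻¹' B, (measurable_pi_apply i) hB⟩ : ℝ) = (μ i B).toReal}

end FATransport

namespace FATransport

/-- `(π_1, …, π_n)` is a `P`-martingale for a finitely additive probability `P` on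
`ℬ(ℝⁿ)`: each `P(|π_i|) < ∞`, `P(π_1) = 0`, and `P((π_{i+1} - π_i) g(π_1,…,π_i)) = 0`
for every bounded Borel `g` (encoded as a bounded Borel function on `ℝⁿ` depending
only on the first `i` coordinates). -/
def IsMartFAP {n : ℕ} (hn : 0 < n) (P : MSet (Fin n → ℝ) → unitInterval) : Prop :=
  (∀ i : Fin n, fapIntTop P (fun ω => ENNReal.ofReal |ω i|) < ⊤) ∧
    fapIntR P (fun ω => ω ⟨0, hn⟩) = 0 ∧
    ∀ i j : Fin n, (j : ℕ) = (i : ℕ) + 1 →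
      ∀ g : (Fin n → ℝ) → ℝ, Measurable g → (∃ C, ∀ x, |g x| ≤ C) →
        (∀ x y : Fin n → ℝ, (∀ k : Fin n, k ≤ i → x k = y k) → g x = g y) →
        fapIntR P (fun ω => (ω j - ω i) * g ω) = 0

end FATransport

namespace FATransport

variable {n : ℕ} {Ω : Fin n → Type*} [∀ i, MeasurableSpace (Ω i)]

/-- Condition (4.1) of the paper: `Σᵢ μᵢ(fᵢ) ≥ inf_{Q ∈ 𝒰} Q(⊕ᵢ fᵢ)` for all bounded
measurable `fᵢ : Ωᵢ → ℝ`. The infimum is taken in `EReal`, so that `inf ∅ = ∞` (and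
the condition fails when `𝒰 = ∅`). -/
def DualCond (μ : ∀ i, Measure (Ω i))
    (U : Set (MSet (∀ i, Ω i) → unitInterval)) : Prop :=
  ∀ f : ∀ i, Ω i → ℝ, (∀ i, Measurable (f i)) → (∀ i, ∃ C, ∀ x, |f i x| ≤ C) →
    (⨅ Q ∈ U, ((fapInt Q (fun ω => ∑ i, f i (ω i)) : ℝ) : EReal)) ≤
      ((∑ i, ∫ x, f i x ∂(μ i) : ℝ) : EReal)

end FATransport

/-!
Since `P*` is concentrated on a compact set `A`, so is every `Q ≪ P*`, and for such `Q` the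
martingale property says that `Q(1_A h) = 0` for a family of functions `h` that are bounded on `A`.
For bounded measurable `f` the map `Q ↦ Q(f)` is affine, and continuous on `ℙ` because it is a
uniform limit of integrals of simple functions. Hence `𝒰` is a compact convex subset of `[0,1]^𝒜`,
and so is the set of functionals `(f₁, …, fₙ) ↦ Q(⊕ᵢ fᵢ)`, `Q ∈ 𝒰`, in the product space of all real
functions of `(f₁, …, fₙ)`. If `(f₁, …, fₙ) ↦ ∑ᵢ μᵢ(fᵢ)` is not in this set, Hahn–Banach separates
it by a finite combination of evaluations, which acts on linear functionals as the evaluation at a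
single tuple `(f₁, …, fₙ)`; this tuple violates the dual condition.
-/

namespace FATransport

section FiniteAdditivity

variable {α : Type*} [MeasurableSpace α] {P Q : MSet α → unitInterval}

lemma IsFAP.apply_empty (hP : IsFAP P) : (P ⟨∅, .empty⟩ : ℝ) = 0 := by
  have h := hP.2 ⟨∅, .empty⟩ ⟨∅, .empty⟩ (disjoint_empty _)
  simp only [union_self] at h
  linarith

lemma IsFAP.apply_compl (hP : IsFAP P) {A : Set α} (hA : MeasurableSet A) :
    (P ⟨Aᶜ, hA.compl⟩ : ℝ) = 1 - P ⟨A, hA⟩ := by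
  have h := hP.2 ⟨A, hA⟩ ⟨Aᶜ, hA.compl⟩ disjoint_compl_right
  simp only [union_compl_self, hP.1] at h
  linarith

lemma FapAC.apply_eq_one (h : FapAC Q P) (hQ : IsFAP Q) (hP : IsFAP P) {A : Set α}
    (hA : MeasurableSet A) (hPA : (P ⟨A, hA⟩ : ℝ) = 1) : (Q ⟨A, hA⟩ : ℝ) = 1 := by
  have hQA : (Q ⟨Aᶜ, hA.compl⟩ : ℝ) = 0 := h _ (by rw [hP.apply_compl hA, hPA, sub_self])
  linarith [hQ.apply_compl hA]

open Classical in
/-- The set function `P` as multiplication operators on `ℝ`, extended by `0` to nonmeasurable sets: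
the form in which `SimpleFunc.setToSimpleFunc` integrates simple functions against `P`. -/
noncomputable def massCLM (P : MSet α → unitInterval) (A : Set α) : ℝ →L[ℝ] ℝ :=
  if hA : MeasurableSet A then (P ⟨A, hA⟩ : ℝ) • ContinuousLinearMap.id ℝ ℝ else 0

lemma massCLM_apply {A : Set α} (hA : MeasurableSet A) (y : ℝ) :
    massCLM P A y = P ⟨A, hA⟩ * y := by
  simp [massCLM, hA]

lemma IsFAP.massCLM_empty (hP : IsFAP P) : massCLM P ∅ = 0 := by
  ext
  rw [massCLM_apply .empty, hP.apply_empty, zero_mul, zero_apply]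

lemma IsFAP.finMeasAdditive_massCLM (hP : IsFAP P) :
    FinMeasAdditive (0 : Measure α) (massCLM P) := by
  intro A B hA hB _ _ hAB
  ext
  have := hP.2 ⟨A, hA⟩ ⟨B, hB⟩ hAB
  simp_all [massCLM_apply, hA.union hB]

lemma simpleInt_eq_setToSimpleFunc (P : MSet α → unitInterval) (s : SimpleFunc α ℝ) :
    simpleInt P s = s.setToSimpleFunc (massCLM P) :=
  Finset.sum_congr rfl fun y _ => by rw [massCLM_apply (s.measurableSet_fiber y), mul_comm]

lemma IsFAP.simpleInt_add (hP : IsFAP P) (s t : SimpleFunc α ℝ) :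
    simpleInt P (s + t) = simpleInt P s + simpleInt P t := by
  simp only [simpleInt_eq_setToSimpleFunc]
  exact SimpleFunc.setToSimpleFunc_add _ hP.finMeasAdditive_massCLM
    integrable_zero_measure integrable_zero_measure

lemma IsFAP.simpleInt_smul (hP : IsFAP P) (c : ℝ) (s : SimpleFunc α ℝ) :
    simpleInt P (c • s) = c * simpleInt P s := by
  simp only [simpleInt_eq_setToSimpleFunc]
  exact SimpleFunc.setToSimpleFunc_smul_real _ hP.finMeasAdditive_massCLM c integrable_zero_measure

lemma IsFAP.simpleInt_const (hP : IsFAP P) (c : ℝ) : simpleInt P (.const α c) = c := by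
  rw [simpleInt_eq_setToSimpleFunc, SimpleFunc.setToSimpleFunc_const _ hP.massCLM_empty,
    massCLM_apply .univ, hP.1, one_mul]

lemma IsFAP.simpleInt_indicator_const (hP : IsFAP P) {A : Set α} (hA : MeasurableSet A) (c : ℝ) :
    simpleInt P (.piecewise A hA (.const α c) (.const α 0)) = P ⟨A, hA⟩ * c := by
  rw [simpleInt_eq_setToSimpleFunc, SimpleFunc.setToSimpleFunc_indicator _ hP.massCLM_empty,
    massCLM_apply hA]

lemma IsFAP.simpleInt_mono (hP : IsFAP P) {s t : SimpleFunc α ℝ} (h : s ≤ t) :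
    simpleInt P s ≤ simpleInt P t := by
  simp only [simpleInt_eq_setToSimpleFunc]
  refine SimpleFunc.setToSimpleFunc_mono hP.finMeasAdditive_massCLM (fun A hA _ y hy => ?_)
    integrable_zero_measure integrable_zero_measure h
  rw [massCLM_apply hA]
  exact mul_nonneg (P _).2.1 hy

lemma IsFAP.simpleInt_comp (hP : IsFAP P) {β : Type*} [MeasurableSpace β] {X : α → β}
    (hX : Measurable X) {μ : Measure β} [IsFiniteMeasure μ]
    (hPX : ∀ (B : Set β) (hB : MeasurableSet B), (P ⟨X ⁻¹' B, hX hB⟩ : ℝ) = (μ B).toReal)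
    (s : SimpleFunc β ℝ) : simpleInt P (s.comp X hX) = ∫ x, s x ∂μ := by
  rw [SimpleFunc.integral_eq_sum _ (SimpleFunc.integrable_of_isFiniteMeasure s)]
  have hfiber (y : ℝ) :
      (P ⟨s.comp X hX ⁻¹' {y}, (s.comp X hX).measurableSet_fiber y⟩ : ℝ) = μ.real (s ⁻¹' {y}) :=
    hPX _ (s.measurableSet_fiber y)
  simp only [simpleInt, hfiber, smul_eq_mul, mul_comm]
  refine Finset.sum_subset (SimpleFunc.range_comp_subset_range s hX) fun y _ hy => ?_
  have hempty : s.comp X hX ⁻¹' {y} = ∅ := (SimpleFunc.preimage_eq_empty_iff _ y).2 hy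
  have hmass : μ.real (s ⁻¹' {y}) = 0 := by
    rw [← hfiber]
    simp only [hempty, hP.apply_empty]
  rw [hmass, mul_zero]

end FiniteAdditivity

section Integral

open Filter Topology

variable {α : Type*} [MeasurableSpace α] {P : MSet α → unitInterval} {f g : α → ℝ}

/-- The algebra of bounded measurable real functions, on which every finitely additive probability
acts as a positive linear functional. -/
def bddMeasurable (α : Type*) [MeasurableSpace α] : Subalgebra ℝ (α → ℝ) where
  carrier := {f | Measurable f ∧ ∃ C, ∀ x, |f x| ≤ C}
  add_mem' := by
    rintro f g ⟨hf, C, hC⟩ ⟨hg, D, hD⟩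
    exact ⟨hf.add hg, C + D, fun x => (abs_add_le _ _).trans (add_le_add (hC x) (hD x))⟩
  mul_mem' := by
    rintro f g ⟨hf, C, hC⟩ ⟨hg, D, hD⟩
    refine ⟨hf.mul hg, C * D, fun x => (abs_mul _ _).trans_le ?_⟩
    exact mul_le_mul (hC x) (hD x) (abs_nonneg _) ((abs_nonneg _).trans (hC x))
  algebraMap_mem' c := ⟨measurable_const, |c|, fun _ => le_rfl⟩

lemma indicator_mem_bddMeasurable {A : Set α} (hA : MeasurableSet A) (hf : Measurable f) {C : ℝ}
    (hC : ∀ x ∈ A, |f x| ≤ C) : A.indicator f ∈ bddMeasurable α := by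
  refine ⟨hf.indicator hA, |C|, fun x => ?_⟩
  by_cases hx : x ∈ A
  · simpa [hx] using (hC x hx).trans (le_abs_self C)
  · simp [hx]

lemma indicator_one_mem_bddMeasurable {A : Set α} (hA : MeasurableSet A) :
    A.indicator 1 ∈ bddMeasurable α :=
  indicator_mem_bddMeasurable hA measurable_one (C := 1) (by simp)

lemma comp_mem_bddMeasurable {β : Type*} [MeasurableSpace β] {f : β → ℝ} (hf : f ∈ bddMeasurable β)
    {X : α → β} (hX : Measurable X) : (fun x => f (X x)) ∈ bddMeasurable α :=
  ⟨hf.1.comp hX, hf.2.imp fun _ hC x => hC (X x)⟩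

lemma integrable_of_mem_bddMeasurable {μ : Measure α} [IsFiniteMeasure μ]
    (hf : f ∈ bddMeasurable α) : Integrable f μ :=
  let ⟨C, hC⟩ := hf.2
  .of_bound hf.1.aestronglyMeasurable C (.of_forall hC)

lemma exists_simpleFunc_abs_sub_le (hf : f ∈ bddMeasurable α) {ε : ℝ} (hε : 0 < ε) :
    ∃ s : SimpleFunc α ℝ, ∀ x, |s x - f x| ≤ ε := by
  obtain ⟨hfm, C, hC⟩ := hf
  have hmeas : Measurable fun x => ⌊f x / ε⌋ := (hfm.div_const ε).floor
  have hfin : (range fun x => ⌊f x / ε⌋).Finite := by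
    refine (finite_Icc ⌊-C / ε⌋ ⌊C / ε⌋).subset (range_subset_iff.2 fun x => ?_)
    constructor <;> gcongr
    exacts [(abs_le.1 (hC x)).1, (abs_le.1 (hC x)).2]
  let rounding : SimpleFunc α ℤ := ⟨_, fun y => hmeas (measurableSet_singleton y), hfin⟩
  refine ⟨rounding.map fun z : ℤ => ε * (z : ℝ), fun x => ?_⟩
  calc |ε * ⌊f x / ε⌋ - f x| = ε * Int.fract (f x / ε) := by
        rw [abs_sub_comm, Int.fract, mul_sub, mul_div_cancel₀ _ hε.ne', abs_of_nonneg]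
        rw [sub_nonneg, ← le_div_iff₀' hε]
        exact Int.floor_le _
    _ ≤ ε := mul_le_of_le_one_right hε.le (Int.fract_lt_one _).le

lemma exists_tendstoUniformly_simpleFunc (hf : f ∈ bddMeasurable α) :
    ∃ s : ℕ → SimpleFunc α ℝ, TendstoUniformly (fun k => s k) f atTop := by
  choose s hs using fun k : ℕ => exists_simpleFunc_abs_sub_le hf (Nat.one_div_pos_of_nat (n := k))
  refine ⟨s, Metric.tendstoUniformly_iff.2 fun ε hε => ?_⟩
  filter_upwards [tendsto_one_div_add_atTop_nhds_zero_nat.eventually_lt_const hε] with k hk x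
  rw [dist_comm]
  exact (hs k x).trans_lt hk

lemma IsFAP.bddAbove_simpleInt (hP : IsFAP P) {C : ℝ} (hC : ∀ x, f x ≤ C) :
    BddAbove (simpleInt P '' {s : SimpleFunc α ℝ | ∀ x, s x ≤ f x}) := by
  refine ⟨C, forall_mem_image.2 fun s hs => ?_⟩
  rw [← hP.simpleInt_const C]
  exact hP.simpleInt_mono fun x => (hs x).trans (hC x)

lemma IsFAP.simpleInt_le_fapInt (hP : IsFAP P) (hf : f ∈ bddMeasurable α) {s : SimpleFunc α ℝ}
    (hs : ∀ x, s x ≤ f x) : simpleInt P s ≤ fapInt P f := by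
  obtain ⟨C, hC⟩ := hf.2
  exact le_csSup (hP.bddAbove_simpleInt fun x => (le_abs_self _).trans (hC x)) ⟨s, hs, rfl⟩

lemma IsFAP.fapInt_le_simpleInt (hP : IsFAP P) (hf : f ∈ bddMeasurable α) {s : SimpleFunc α ℝ}
    (hs : ∀ x, f x ≤ s x) : fapInt P f ≤ simpleInt P s := by
  obtain ⟨C, hC⟩ := hf.2
  refine csSup_le ⟨_, .const α (-C), fun x => neg_le_of_abs_le (hC x), rfl⟩ ?_
  exact forall_mem_image.2 fun t ht => hP.simpleInt_mono fun x => (ht x).trans (hs x)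

lemma IsFAP.abs_simpleInt_sub_fapInt_le (hP : IsFAP P) (hf : f ∈ bddMeasurable α)
    {s : SimpleFunc α ℝ} {ε : ℝ} (hs : ∀ x, |s x - f x| ≤ ε) :
    |simpleInt P s - fapInt P f| ≤ ε := by
  have hlower := hP.simpleInt_le_fapInt hf (s := s + .const α (-ε)) fun x => by
    simpa [← sub_eq_add_neg] using sub_le_comm.1 (le_of_abs_le (hs x))
  have hupper := hP.fapInt_le_simpleInt hf (s := s + .const α ε) fun x => by
    simpa using sub_le_iff_le_add.1 (sub_le_of_abs_sub_le_left (hs x))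
  rw [hP.simpleInt_add, hP.simpleInt_const] at hlower hupper
  rw [abs_le]
  constructor <;> linarith

lemma IsFAP.tendsto_simpleInt (hP : IsFAP P) (hf : f ∈ bddMeasurable α) {s : ℕ → SimpleFunc α ℝ}
    (hs : TendstoUniformly (fun k => s k) f atTop) :
    Tendsto (fun k => simpleInt P (s k)) atTop (𝓝 (fapInt P f)) := by
  rw [Metric.tendstoUniformly_iff] at hs
  refine Metric.tendsto_nhds.2 fun ε hε => ?_
  filter_upwards [hs (ε / 2) (half_pos hε)] with k hk
  refine (hP.abs_simpleInt_sub_fapInt_le hf fun x => ?_).trans_lt (half_lt_self hε)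
  rw [← Real.dist_eq, dist_comm]
  exact (hk x).le

lemma IsFAP.fapInt_add (hP : IsFAP P) (hf : f ∈ bddMeasurable α) (hg : g ∈ bddMeasurable α) :
    fapInt P (f + g) = fapInt P f + fapInt P g := by
  obtain ⟨s, hs⟩ := exists_tendstoUniformly_simpleFunc hf
  obtain ⟨t, ht⟩ := exists_tendstoUniformly_simpleFunc hg
  have hst := hP.tendsto_simpleInt (add_mem hf hg) (s := fun k => s k + t k) (hs.add ht)
  simp only [hP.simpleInt_add] at hst
  exact tendsto_nhds_unique hst ((hP.tendsto_simpleInt hf hs).add (hP.tendsto_simpleInt hg ht))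

lemma IsFAP.fapInt_smul (hP : IsFAP P) (c : ℝ) (hf : f ∈ bddMeasurable α) :
    fapInt P (c • f) = c * fapInt P f := by
  obtain ⟨s, hs⟩ := exists_tendstoUniformly_simpleFunc hf
  have hcs := hP.tendsto_simpleInt ((bddMeasurable α).smul_mem hf c) (s := fun k => c • s k)
    ((uniformContinuous_const_smul c).comp_tendstoUniformly hs)
  simp only [hP.simpleInt_smul] at hcs
  exact tendsto_nhds_unique hcs ((hP.tendsto_simpleInt hf hs).const_mul c)

/-- Integration against a finitely additive probability as a linear functional. -/
noncomputable def IsFAP.integral (hP : IsFAP P) : bddMeasurable α →ₗ[ℝ] ℝ where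
  toFun f := fapInt P f
  map_add' f g := hP.fapInt_add f.2 g.2
  map_smul' c f := hP.fapInt_smul c f.2

lemma IsFAP.fapInt_sub (hP : IsFAP P) (hf : f ∈ bddMeasurable α) (hg : g ∈ bddMeasurable α) :
    fapInt P (f - g) = fapInt P f - fapInt P g :=
  map_sub hP.integral ⟨f, hf⟩ ⟨g, hg⟩

lemma IsFAP.fapInt_mono_on (hP : IsFAP P) (hf : f ∈ bddMeasurable α) (hg : g ∈ bddMeasurable α)
    {A : Set α} (hA : MeasurableSet A) (hPA : (P ⟨A, hA⟩ : ℝ) = 1) (hfg : ∀ x ∈ A, f x ≤ g x) :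
    fapInt P f ≤ fapInt P g := by
  rw [← sub_nonneg, ← hP.fapInt_sub hg hf]
  obtain ⟨C, hC⟩ := (sub_mem hg hf).2
  have h := hP.simpleInt_le_fapInt (sub_mem hg hf)
    (s := .piecewise Aᶜ hA.compl (.const α (-C)) (.const α 0)) fun x => ?_
  · rwa [hP.simpleInt_indicator_const, hP.apply_compl hA, hPA, sub_self, zero_mul] at h
  · by_cases hx : x ∈ A
    · simpa [hx] using hfg x hx
    · simpa [hx] using neg_le_of_abs_le (hC x)

lemma IsFAP.fapInt_indicator_one (hP : IsFAP P) {A : Set α} (hA : MeasurableSet A) :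
    fapInt P (A.indicator 1) = P ⟨A, hA⟩ := by
  have h := hP.abs_simpleInt_sub_fapInt_le (indicator_one_mem_bddMeasurable hA) (ε := 0)
    (s := .piecewise A hA (.const α 1) (.const α 0)) (fun x => by simp [indicator, piecewise])
  rw [hP.simpleInt_indicator_const, mul_one] at h
  linarith [abs_nonpos_iff.1 h]

lemma IsFAP.fapInt_comp (hP : IsFAP P) {β : Type*} [MeasurableSpace β] {X : α → β}
    (hX : Measurable X) {μ : Measure β} [IsFiniteMeasure μ]
    (hPX : ∀ (B : Set β) (hB : MeasurableSet B), (P ⟨X ⁻¹' B, hX hB⟩ : ℝ) = (μ B).toReal)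
    {f : β → ℝ} (hf : f ∈ bddMeasurable β) : fapInt P (fun x => f (X x)) = ∫ y, f y ∂μ := by
  obtain ⟨s, hs⟩ := exists_tendstoUniformly_simpleFunc hf
  have hlim := hP.tendsto_simpleInt (comp_mem_bddMeasurable hf hX) (s := fun k => (s k).comp X hX)
    (hs.comp X)
  simp only [hP.simpleInt_comp hX hPX] at hlim
  refine tendsto_nhds_unique hlim (tendsto_integral_filter_of_norm_le_const
    (.of_forall fun k => (s k).aestronglyMeasurable) ?_ (.of_forall fun y => hs.tendsto_at y))
  obtain ⟨C, hC⟩ := hf.2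
  refine ⟨C + 1, ?_⟩
  filter_upwards [Metric.tendstoUniformly_iff.1 hs 1 one_pos] with k hk
  refine .of_forall fun y => ?_
  calc ‖s k y‖ ≤ ‖f y‖ + dist (f y) (s k y) := by
        rw [dist_eq_norm, norm_sub_rev]
        exact norm_le_norm_add_norm_sub' _ _
    _ ≤ C + 1 := add_le_add (hC y) (hk y).le

end Integral

section Concentrated

variable {α : Type*} [MeasurableSpace α] {P : MSet α → unitInterval} {f h : α → ℝ}

lemma toReal_ofReal_inf_natCast (a : ℝ) (k : ℕ) :
    (ENNReal.ofReal a ⊓ (k : ℝ≥0∞)).toReal = min a⁺ k := by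
  rw [ENNReal.toReal_inf ofReal_ne_top (natCast_ne_top k), toReal_natCast]
  rfl

lemma posPart_mem_bddMeasurable (hf : f ∈ bddMeasurable α) : f⁺ ∈ bddMeasurable α :=
  ⟨hf.1.sup_const 0, hf.2.imp fun _ hC x => (abs_of_nonneg (posPart_nonneg (f x))).trans_le <|
    (sup_le (le_abs_self _) (abs_nonneg _)).trans (hC x)⟩

lemma abs_mem_bddMeasurable (hf : f ∈ bddMeasurable α) : |f| ∈ bddMeasurable α :=
  ⟨hf.1.sup hf.1.neg, hf.2.imp fun _ hC x => (abs_abs (f x)).trans_le (hC x)⟩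

lemma IsFAP.fapIntTop_ofReal (hP : IsFAP P) {A : Set α} (hA : MeasurableSet A)
    (hPA : (P ⟨A, hA⟩ : ℝ) = 1) (hf : f ∈ bddMeasurable α) (hh : Measurable h)
    (hfh : EqOn h f A) :
    fapIntTop P (fun x => ENNReal.ofReal (h x)) = ENNReal.ofReal (fapInt P f⁺) := by
  simp only [fapIntTop, toReal_ofReal_inf_natCast]
  have htrunc (k : ℕ) : (fun x => min (h x)⁺ (k : ℝ)) ∈ bddMeasurable α :=
    ⟨(hh.sup_const 0).min measurable_const, k, fun x => by
      rw [abs_of_nonneg (le_min (posPart_nonneg _) k.cast_nonneg)]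
      exact min_le_right _ _⟩
  refine le_antisymm (iSup_le fun k => ?_) ?_
  · refine ofReal_le_ofReal (hP.fapInt_mono_on (htrunc k) (posPart_mem_bddMeasurable hf) hA hPA ?_)
    intro x hx
    rw [hfh hx]
    exact min_le_left _ _
  · obtain ⟨C, hC⟩ := hf.2
    obtain ⟨k, hk⟩ := exists_nat_ge C
    refine le_iSup_of_le k (ofReal_le_ofReal
      (hP.fapInt_mono_on (posPart_mem_bddMeasurable hf) (htrunc k) hA hPA ?_))
    intro x hx
    rw [hfh hx]
    exact le_min le_rfl ((sup_le (le_abs_self _) (abs_nonneg _)).trans ((hC x).trans hk))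

lemma IsFAP.fapIntegrable (hP : IsFAP P) {A : Set α} (hA : MeasurableSet A)
    (hPA : (P ⟨A, hA⟩ : ℝ) = 1) (hf : f ∈ bddMeasurable α) (hh : Measurable h)
    (hfh : EqOn h f A) : FapIntegrable P h := by
  rw [FapIntegrable, hP.fapIntTop_ofReal hA hPA (abs_mem_bddMeasurable hf) hh.abs
    fun x hx => congrArg abs (hfh hx)]
  exact ofReal_lt_top

lemma IsFAP.fapIntR_eq_fapInt (hP : IsFAP P) {A : Set α} (hA : MeasurableSet A)
    (hPA : (P ⟨A, hA⟩ : ℝ) = 1) (hf : f ∈ bddMeasurable α) (hh : Measurable h)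
    (hfh : EqOn h f A) : fapIntR P h = fapInt P f := by
  have hnonneg {g : α → ℝ} (hg : g ∈ bddMeasurable α) : 0 ≤ fapInt P g⁺ := by
    have := hP.simpleInt_le_fapInt (posPart_mem_bddMeasurable hg) (s := .const α 0)
      fun x => posPart_nonneg (g x)
    rwa [hP.simpleInt_const] at this
  have hf' := neg_mem hf
  rw [fapIntR, hP.fapIntTop_ofReal hA hPA hf hh hfh,
    hP.fapIntTop_ofReal hA hPA hf' (h := fun x => -h x) hh.neg
      fun x hx => congrArg Neg.neg (hfh hx),
    toReal_ofReal (hnonneg hf), toReal_ofReal (hnonneg hf'),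
    ← hP.fapInt_sub (posPart_mem_bddMeasurable hf) (posPart_mem_bddMeasurable hf'),
    posPart_neg, posPart_sub_negPart]

end Concentrated

section TopologyConvexity

variable {α : Type*} [MeasurableSpace α] {P Q R : MSet α → unitInterval} {f : α → ℝ}

lemma continuous_coe_apply (A : MSet α) :
    Continuous fun P : MSet α → unitInterval => (P A : ℝ) :=
  continuous_subtype_val.comp (continuous_apply A)

lemma isClosed_FAPs : IsClosed (FAPs α) := by
  refine .inter (isClosed_eq (continuous_coe_apply _) continuous_const) ?_
  change IsClosed {P : MSet α → unitInterval | ∀ A B : MSet α, Disjoint A.1 B.1 →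
    (P ⟨A.1 ∪ B.1, A.2.union B.2⟩ : ℝ) = P A + P B}
  simp only [ofPred_forall]
  exact isClosed_iInter fun A => isClosed_iInter fun B => isClosed_iInter fun _ =>
    isClosed_eq (continuous_coe_apply _) ((continuous_coe_apply A).add (continuous_coe_apply B))

lemma isClosed_setOf_fapAC (R : MSet α → unitInterval) : IsClosed {Q | FapAC Q R} := by
  simp only [FapAC, ofPred_forall]
  exact isClosed_iInter fun A => isClosed_iInter fun _ =>
    isClosed_eq (continuous_coe_apply A) continuous_const

lemma continuous_simpleInt (s : SimpleFunc α ℝ) :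
    Continuous fun P : MSet α → unitInterval => simpleInt P s :=
  continuous_finsetSum _ fun _ _ => continuous_const.mul (continuous_coe_apply _)

lemma continuousOn_fapInt (hf : f ∈ bddMeasurable α) :
    ContinuousOn (fun P => fapInt P f) (FAPs α) := by
  refine continuousOn_of_uniform_approx_of_continuousOn fun u hu => ?_
  obtain ⟨ε, hε, hεu⟩ := Metric.mem_uniformity_dist.1 hu
  obtain ⟨s, hs⟩ := exists_simpleFunc_abs_sub_le hf (half_pos hε)
  refine ⟨_, (continuous_simpleInt s).continuousOn, fun P hP => hεu ?_⟩
  rw [dist_comm]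
  exact (IsFAP.abs_simpleInt_sub_fapInt_le hP hf hs).trans_lt (half_lt_self hε)

/-- The mixture `(1 - t) P + t Q`. The cube `[0,1]^𝒜` is not a vector space, so convexity of sets
of finitely additive probabilities is expressed through mixtures. -/
noncomputable def mix (t : unitInterval) (P Q : MSet α → unitInterval) : MSet α → unitInterval :=
  fun A => Icc.convexComb (P A) (Q A) t

/-- Convexity of a subset of the cube `[0,1]^𝒜`. -/
def MixClosed (U : Set (MSet α → unitInterval)) : Prop :=
  ∀ t, ∀ P ∈ U, ∀ Q ∈ U, mix t P Q ∈ U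

lemma coe_mix_apply (t : unitInterval) (P Q : MSet α → unitInterval) (A : MSet α) :
    (mix t P Q A : ℝ) = (1 - t) * P A + t * Q A :=
  rfl

lemma mixClosed_FAPs : MixClosed (FAPs α) := by
  refine fun t P hP Q hQ => ⟨?_, fun A B hAB => ?_⟩
  · rw [coe_mix_apply, hP.1, hQ.1]
    ring
  · simp only [coe_mix_apply, hP.2 A B hAB, hQ.2 A B hAB]
    ring

lemma simpleInt_mix (t : unitInterval) (P Q : MSet α → unitInterval) (s : SimpleFunc α ℝ) :
    simpleInt (mix t P Q) s = (1 - t) * simpleInt P s + t * simpleInt Q s := by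
  simp only [simpleInt, coe_mix_apply, Finset.mul_sum, ← Finset.sum_add_distrib]
  exact Finset.sum_congr rfl fun _ _ => by ring

lemma IsFAP.fapInt_mix (hP : IsFAP P) (hQ : IsFAP Q) (t : unitInterval)
    (hf : f ∈ bddMeasurable α) :
    fapInt (mix t P Q) f = (1 - t) * fapInt P f + t * fapInt Q f := by
  obtain ⟨s, hs⟩ := exists_tendstoUniformly_simpleFunc hf
  have hlim := IsFAP.tendsto_simpleInt (mixClosed_FAPs t P hP Q hQ) hf hs
  simp only [simpleInt_mix] at hlim
  exact tendsto_nhds_unique hlim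
    (((hP.tendsto_simpleInt hf hs).const_mul _).add ((hQ.tendsto_simpleInt hf hs).const_mul _))

/-- The finitely additive probabilities absolutely continuous with respect to `R` under which
every member of `H` has integral zero. -/
def acAnnihilator (R : MSet α → unitInterval) (H : Set (α → ℝ)) : Set (MSet α → unitInterval) :=
  {Q | IsFAP Q ∧ FapAC Q R ∧ ∀ h ∈ H, fapInt Q h = 0}

lemma isClosed_acAnnihilator {H : Set (α → ℝ)} (hH : H ⊆ bddMeasurable α) :
    IsClosed (acAnnihilator R H) := by
  have hzero : acAnnihilator R H =
      {Q | FapAC Q R} ∩ (FAPs α ∩ ⋂ h ∈ H, FAPs α ∩ (fun Q => fapInt Q h) ⁻¹' {0}) := by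
    ext Q
    simp only [acAnnihilator, FAPs, mem_inter_iff, mem_iInter, mem_preimage, mem_singleton_iff,
      Set.mem_ofPred_eq]
    exact ⟨fun ⟨hQ, hac, hH⟩ => ⟨hac, hQ, fun h hh => ⟨hQ, hH h hh⟩⟩,
      fun ⟨hac, hQ, hH⟩ => ⟨hQ, hac, fun h hh => (hH h hh).2⟩⟩
  rw [hzero]
  exact (isClosed_setOf_fapAC R).inter (isClosed_FAPs.inter (isClosed_biInter fun h hh =>
    (continuousOn_fapInt (hH hh)).preimage_isClosed_of_isClosed isClosed_FAPs isClosed_singleton))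

lemma mixClosed_acAnnihilator {H : Set (α → ℝ)} (hH : H ⊆ bddMeasurable α) :
    MixClosed (acAnnihilator R H) := by
  rintro t P ⟨hP, hPR, hPH⟩ Q ⟨hQ, hQR, hQH⟩
  refine ⟨mixClosed_FAPs t P hP Q hQ, fun A hA => ?_, fun h hh => ?_⟩
  · simp [coe_mix_apply, hPR A hA, hQR A hA]
  · simp [hP.fapInt_mix hQ t (hH hh), hPH h hh, hQH h hh]

end TopologyConvexity

section Separation

lemma exists_finsupp_apply_eq_sum {ι : Type*} (φ : (ι → ℝ) →L[ℝ] ℝ) :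
    ∃ c : ι →₀ ℝ, ∀ x, φ x = c.sum fun i a => a * x i := by
  have hspan : (φ : (ι → ℝ) →ₗ[ℝ] ℝ) ∈ Submodule.span ℝ (range LinearMap.proj) :=
    (LinearMap.mem_span_iff_continuous _).2 φ.continuous
  obtain ⟨c, hc⟩ := Finsupp.mem_span_range_iff_exists_finsupp.1 hspan
  refine ⟨c, fun x => ?_⟩
  have := LinearMap.congr_fun hc x
  simpa [Finsupp.sum] using this.symm

lemma mem_of_forall_le_apply {V : Type*} [AddCommGroup V] [Module ℝ V] {S : Set (V → ℝ)}
    (hclosed : IsClosed S) (hconvex : Convex ℝ S) (hS : ∀ L ∈ S, IsLinearMap ℝ L) {ℓ : V → ℝ}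
    (hℓ : IsLinearMap ℝ ℓ) (h : ∀ v c, (∀ L ∈ S, c ≤ L v) → c ≤ ℓ v) : ℓ ∈ S := by
  by_contra hℓS
  obtain ⟨φ, c, hφℓ, hφS⟩ := geometric_hahn_banach_point_closed hconvex hclosed hℓS
  obtain ⟨a, ha⟩ := exists_finsupp_apply_eq_sum φ
  have heval {L : V → ℝ} (hL : IsLinearMap ℝ L) : φ L = L (a.sum fun v t => t • v) := by
    rw [ha, ← hL.mk'_apply, map_finsuppSum]
    simp
  refine hφℓ.not_ge ?_
  rw [heval hℓ]
  exact h _ c fun L hL => (hφS L hL).le.trans_eq (heval (hS L hL))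

end Separation

section Duality

variable {n : ℕ} {Ω : Fin n → Type*} [∀ i, MeasurableSpace (Ω i)]

lemma sum_eval_mem_bddMeasurable {f : ∀ i, Ω i → ℝ} (hf : ∀ i, f i ∈ bddMeasurable (Ω i)) :
    (fun ω : ∀ i, Ω i => ∑ i, f i (ω i)) ∈ bddMeasurable (∀ i, Ω i) := by
  simp only [← Finset.sum_fn]
  exact sum_mem fun i _ => comp_mem_bddMeasurable (hf i) (measurable_pi_apply i)

/-- The map `(f₁, …, fₙ) ↦ ⊕ᵢ fᵢ` on bounded measurable functions. -/
def directSum (Ω : Fin n → Type*) [∀ i, MeasurableSpace (Ω i)] :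
    (∀ i, bddMeasurable (Ω i)) →ₗ[ℝ] bddMeasurable (∀ i, Ω i) where
  toFun f := ⟨fun ω => ∑ i, (f i : Ω i → ℝ) (ω i), sum_eval_mem_bddMeasurable fun i => (f i).2⟩
  map_add' _ _ := by ext; simp [Finset.sum_add_distrib]
  map_smul' _ _ := by ext; simp [Finset.mul_sum]

/-- The action `(f₁, …, fₙ) ↦ P(⊕ᵢ fᵢ)` of a set function on tuples of bounded functions. -/
noncomputable def sumFunctional (P : MSet (∀ i, Ω i) → unitInterval)
    (f : ∀ i, bddMeasurable (Ω i)) : ℝ :=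
  fapInt P (directSum Ω f)

variable {P : MSet (∀ i, Ω i) → unitInterval} {U : Set (MSet (∀ i, Ω i) → unitInterval)}
  {μ : ∀ i, Measure (Ω i)}

lemma IsFAP.isLinearMap_sumFunctional (hP : IsFAP P) : IsLinearMap ℝ (sumFunctional P) :=
  (hP.integral ∘ₗ directSum Ω).isLinear

lemma continuousOn_sumFunctional : ContinuousOn (sumFunctional (Ω := Ω)) (FAPs (∀ i, Ω i)) :=
  continuousOn_pi.2 fun f => continuousOn_fapInt (directSum Ω f).2

lemma isClosed_image_sumFunctional (hU : U ⊆ FAPs (∀ i, Ω i)) (hclosed : IsClosed U) :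
    IsClosed (sumFunctional '' U) :=
  (hclosed.isCompact.image_of_continuousOn (continuousOn_sumFunctional.mono hU)).isClosed

lemma MixClosed.convex_image_sumFunctional (hmix : MixClosed U) (hU : U ⊆ FAPs (∀ i, Ω i)) :
    Convex ℝ (sumFunctional '' U) := by
  rintro _ ⟨P, hP, rfl⟩ _ ⟨Q, hQ, rfl⟩ a b ha hb hab
  let t : unitInterval := ⟨b, hb, by linarith⟩
  refine ⟨mix t P Q, hmix t P hP Q hQ, ?_⟩
  ext f
  rw [sumFunctional, IsFAP.fapInt_mix (hU hP) (hU hQ) t (directSum Ω f).2, ← eq_sub_of_add_eq hab]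
  rfl

lemma IsFAP.mem_couplings_of_sumFunctional_eq (hP : IsFAP P)
    (h : sumFunctional P = fun f => ∑ i, ∫ x, (f i : Ω i → ℝ) x ∂μ i) : P ∈ couplings μ := by
  classical
  refine ⟨hP, fun i B hB => ?_⟩
  let oneB : bddMeasurable (Ω i) := ⟨B.indicator 1, indicator_one_mem_bddMeasurable hB⟩
  have hsum : (directSum Ω (Pi.single i oneB) : (∀ i, Ω i) → ℝ) =
      (Function.eval i ⁻¹' B).indicator 1 := by
    ext ω
    refine (Fintype.sum_eq_single i fun j hj => by simp [hj]).trans ?_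
    simp [oneB, indicator]
  have hint : ∑ j, ∫ x, ((Pi.single i oneB : ∀ j, bddMeasurable (Ω j)) j : Ω j → ℝ) x ∂μ j =
      (μ i B).toReal := by
    refine (Fintype.sum_eq_single i fun j hj => by simp [hj]).trans ?_
    simp [oneB, integral_indicator_one hB, Measure.real]
  rw [← hint, ← congrFun h (Pi.single i oneB), sumFunctional, hsum]
  exact (hP.fapInt_indicator_one (measurable_pi_apply i hB)).symm

variable [∀ i, IsFiniteMeasure (μ i)]

lemma isLinearMap_sum_integral :
    IsLinearMap ℝ fun f : ∀ i, bddMeasurable (Ω i) => ∑ i, ∫ x, (f i : Ω i → ℝ) x ∂μ i where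
  map_add f g := by
    rw [← Finset.sum_add_distrib]
    exact Finset.sum_congr rfl fun i _ => integral_add
      (integrable_of_mem_bddMeasurable (f i).2) (integrable_of_mem_bddMeasurable (g i).2)
  map_smul c f := by
    rw [smul_eq_mul, Finset.mul_sum]
    exact Finset.sum_congr rfl fun i _ => integral_const_mul c _

lemma fapInt_sum_of_mem_couplings (hP : P ∈ couplings μ) {f : ∀ i, Ω i → ℝ}
    (hf : ∀ i, f i ∈ bddMeasurable (Ω i)) :
    fapInt P (fun ω => ∑ i, f i (ω i)) = ∑ i, ∫ x, f i x ∂μ i := by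
  obtain ⟨hP, hmarginal⟩ := hP
  let pullback (i : Fin n) : bddMeasurable (∀ i, Ω i) :=
    ⟨_, comp_mem_bddMeasurable (hf i) (measurable_pi_apply i)⟩
  calc fapInt P (fun ω => ∑ i, f i (ω i)) = hP.integral (∑ i, pullback i) := by
        congr 1
        ext ω
        simp [pullback]
    _ = ∑ i, hP.integral (pullback i) := map_sum ..
    _ = ∑ i, ∫ x, f i x ∂μ i := Finset.sum_congr rfl fun i _ =>
        hP.fapInt_comp (measurable_pi_apply i) (hmarginal i) (hf i)

theorem couplings_inter_nonempty_iff_dualCond (hU : U ⊆ FAPs (∀ i, Ω i)) (hclosed : IsClosed U)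
    (hmix : MixClosed U) : (couplings μ ∩ U).Nonempty ↔ DualCond μ U := by
  constructor
  · rintro ⟨Q, hQμ, hQU⟩ f hf hbdd
    rw [← fapInt_sum_of_mem_couplings hQμ fun i => ⟨hf i, hbdd i⟩]
    exact iInf₂_le Q hQU
  · intro hdual
    have hℓ (f : ∀ i, bddMeasurable (Ω i)) (c : ℝ) (hc : ∀ L ∈ sumFunctional '' U, c ≤ L f) :
        c ≤ ∑ i, ∫ x, (f i : Ω i → ℝ) x ∂μ i := by
      refine EReal.coe_le_coe_iff.1 (le_trans ?_ (hdual _ (fun i => (f i).2.1) fun i => (f i).2.2))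
      exact le_iInf₂ fun Q hQ => EReal.coe_le_coe_iff.2 (hc _ ⟨Q, hQ, rfl⟩)
    obtain ⟨Q, hQU, hQ⟩ := mem_of_forall_le_apply (isClosed_image_sumFunctional hU hclosed)
      (hmix.convex_image_sumFunctional hU)
      (forall_mem_image.2 fun Q hQ => IsFAP.isLinearMap_sumFunctional (hU hQ))
      isLinearMap_sum_integral hℓ
    exact ⟨Q, IsFAP.mem_couplings_of_sumFunctional_eq (hU hQU) hQ, hQU⟩

end Duality

section Martingale

variable {n : ℕ}

/-- The functions whose integrals must vanish under a martingale law: the first coordinate, and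
`(π_{i+1} - π_i) g(π_1, …, π_i)` with `g` bounded measurable. -/
def martingaleTests (hn : 0 < n) : Set ((Fin n → ℝ) → ℝ) :=
  insert (fun ω => ω ⟨0, hn⟩) {h | ∃ i j : Fin n, (j : ℕ) = i + 1 ∧
    ∃ g ∈ bddMeasurable (Fin n → ℝ), DependsOn g (Iic i) ∧ h = fun ω => (ω j - ω i) * g ω}

lemma isMartFAP_iff {hn : 0 < n} {P : MSet (Fin n → ℝ) → unitInterval} :
    IsMartFAP hn P ↔
      (∀ i, FapIntegrable P fun ω => ω i) ∧ ∀ h ∈ martingaleTests hn, fapIntR P h = 0 := by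
  refine and_congr_right fun _ => ?_
  rw [martingaleTests, forall_mem_insert]
  refine and_congr_right fun _ => ⟨?_, fun h i j hij g hg hbdd hdep => ?_⟩
  · rintro h _ ⟨i, j, hij, g, hg, hdep, rfl⟩
    exact h i j hij g hg.1 hg.2 hdep
  · exact h _ ⟨i, j, hij, g, ⟨hg, hbdd⟩, hdep, rfl⟩

lemma indicator_coord_mem_bddMeasurable {A : Set (Fin n → ℝ)} (hA : IsCompact A) (i : Fin n) :
    A.indicator (fun ω => ω i) ∈ bddMeasurable (Fin n → ℝ) :=
  let ⟨_, hC⟩ := hA.isBounded.exists_norm_le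
  indicator_mem_bddMeasurable hA.measurableSet (measurable_pi_apply i)
    fun ω hω => (norm_le_pi_norm ω i).trans (hC ω hω)

lemma measurable_of_mem_martingaleTests {hn : 0 < n} {h : (Fin n → ℝ) → ℝ}
    (hh : h ∈ martingaleTests hn) : Measurable h := by
  obtain rfl | ⟨i, j, -, g, hg, -, rfl⟩ := hh
  · exact measurable_pi_apply _
  · exact ((measurable_pi_apply j).sub (measurable_pi_apply i)).mul hg.1

lemma indicator_mem_bddMeasurable_of_mem_martingaleTests {A : Set (Fin n → ℝ)} (hA : IsCompact A)
    {hn : 0 < n} {h : (Fin n → ℝ) → ℝ} (hh : h ∈ martingaleTests hn) :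
    A.indicator h ∈ bddMeasurable (Fin n → ℝ) := by
  obtain rfl | ⟨i, j, -, g, hg, -, rfl⟩ := hh
  · exact indicator_coord_mem_bddMeasurable hA _
  · have hprod : A.indicator (fun ω => (ω j - ω i) * g ω) =
        (A.indicator (fun ω => ω j) - A.indicator fun ω => ω i) * g := by
      ext ω
      by_cases hω : ω ∈ A <;> simp [hω]
    rw [hprod]
    exact mul_mem (sub_mem (indicator_coord_mem_bddMeasurable hA j)
      (indicator_coord_mem_bddMeasurable hA i)) hg

lemma setOf_isMartFAP_eq_acAnnihilator (hn : 0 < n) {R : MSet (Fin n → ℝ) → unitInterval}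
    (hR : IsFAP R) {A : Set (Fin n → ℝ)} (hA : IsCompact A)
    (hRA : (R ⟨A, hA.isClosed.measurableSet⟩ : ℝ) = 1) :
    {Q | IsFAP Q ∧ FapAC Q R ∧ IsMartFAP hn Q} =
      acAnnihilator R (A.indicator '' martingaleTests hn) := by
  ext Q
  refine and_congr_right fun hQ => and_congr_right fun hQR => ?_
  have hQA := hQR.apply_eq_one hQ hR _ hRA
  have hintegrable (i : Fin n) : FapIntegrable Q fun ω => ω i :=
    hQ.fapIntegrable _ hQA (indicator_coord_mem_bddMeasurable hA i) (measurable_pi_apply i)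
      eqOn_indicator.symm
  rw [isMartFAP_iff, and_iff_right hintegrable, forall_mem_image]
  refine forall₂_congr fun h hh => ?_
  rw [hQ.fapIntR_eq_fapInt _ hQA (indicator_mem_bddMeasurable_of_mem_martingaleTests hA hh)
    (measurable_of_mem_martingaleTests hh) eqOn_indicator.symm]

end Martingale

/-- on `Ω = ℝⁿ`, let `P* ∈ ℙ` give mass `1` to some compact set and let
`𝒰 = {Q ∈ ℙ : Q ≪ P* and (π_1,…,π_n) is a Q-martingale}`. Then `M ∩ 𝒰 ≠ ∅` iff
`Σᵢ μᵢ(fᵢ) ≥ inf_{Q ∈ 𝒰} Q(⊕ᵢ fᵢ)` for all bounded Borel `fᵢ : ℝ → ℝ`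
(with `inf ∅ = ∞`). -/
theorem nonempty_iff_dualCond_martingale
    {n : ℕ} (hn : 0 < n) (μ : Fin n → Measure ℝ) [∀ i, IsProbabilityMeasure (μ i)]
    (Pstar : MSet (Fin n → ℝ) → unitInterval) (hPstar : IsFAP Pstar)
    (hcomp : ∃ A : Set (Fin n → ℝ), ∃ hA : IsCompact A,
      (Pstar ⟨A, hA.isClosed.measurableSet⟩ : ℝ) = 1) :
    (couplings μ ∩ {Q | IsFAP Q ∧ FapAC Q Pstar ∧ IsMartFAP hn Q}).Nonempty ↔
      DualCond μ {Q | IsFAP Q ∧ FapAC Q Pstar ∧ IsMartFAP hn Q} := by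
  obtain ⟨A, hA, hPA⟩ := hcomp
  have hbdd : A.indicator '' martingaleTests hn ⊆ bddMeasurable (Fin n → ℝ) :=
    image_subset_iff.2 fun _ => indicator_mem_bddMeasurable_of_mem_martingaleTests hA
  rw [setOf_isMartFAP_eq_acAnnihilator hn hPstar hA hPA]
  exact couplings_inter_nonempty_iff_dualCond (fun _ hQ => hQ.1) (isClosed_acAnnihilator hbdd)
    (mixClosed_acAnnihilator hbdd)

end FATransport
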